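/- (Intermediate value lemma in H¹.) Let R > 0 and let u : B_R → ℝ be continuously differentiable on B_R with ∇u square-integrable over B_R. Then for all real numbers k ≤ l: (l−k) · |{x ∈ B_R : u(x) ≤ k}| · |{x ∈ B_R : u(x) ≥ l}| ≤ R · |B_R| · |{x ∈ B_R : k < u(x) < l}|^{1/2} · ( ∫_{B_R ∩ {u > k}} |∇u(x)|² dx )^{1/2}. -/

import Mathlib

open MeasureTheory Metric Set

noncomputable section

/-- `Euc d` is `ℝ^d` with the Euclidean structure. -/
abbrev Euc (d : ℕ) := EuclideanSpace ℝ (Fin d)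

section Gaussian

/-- The density `exp (-π ‖x‖ ^ 2)` of the Gaussian probability measure with variance
`1 / (2 π)` in each direction. -/
def gaussDensity {E : Type*} [NormedAddCommGroup E] (x : E) : ENNReal :=
  ENNReal.ofReal (Real.exp (-Real.pi * ‖x‖ ^ 2))

lemma measurable_gaussDensity {E : Type*} [NormedAddCommGroup E] [MeasurableSpace E]
    [OpensMeasurableSpace E] : Measurable (gaussDensity : E → ENNReal) := by
  unfold gaussDensity; fun_prop

variable {E : Type*} [NormedAddCommGroup E] [InnerProductSpace ℝ E] [FiniteDimensional ℝ E]
  [MeasurableSpace E] [BorelSpace E]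

variable (E) in
/-- The Gaussian probability measure with density `exp (-π ‖x‖ ^ 2)`. -/
def gaussMeasure : Measure E := volume.withDensity gaussDensity

lemma integrable_exp_neg_pi_mul_sq_norm :
    Integrable (fun x : E => Real.exp (-Real.pi * ‖x‖ ^ 2)) := by
  by_contra h
  have h1 := GaussianFourier.integral_rexp_neg_mul_sq_norm (V := E) Real.pi_pos
  rw [integral_undef h, div_self Real.pi_ne_zero, Real.one_rpow] at h1
  exact zero_ne_one h1

lemma integral_exp_neg_pi_mul_sq_norm :
    ∫ x : E, Real.exp (-Real.pi * ‖x‖ ^ 2) = 1 := by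
  rw [GaussianFourier.integral_rexp_neg_mul_sq_norm (V := E) Real.pi_pos,
    div_self Real.pi_ne_zero, Real.one_rpow]

lemma lintegral_gaussDensity : ∫⁻ x : E, gaussDensity x = 1 := by
  unfold gaussDensity
  rw [← ofReal_integral_eq_lintegral_ofReal integrable_exp_neg_pi_mul_sq_norm
    (ae_of_all _ fun x => (Real.exp_pos _).le), integral_exp_neg_pi_mul_sq_norm, ENNReal.ofReal_one]

instance : IsProbabilityMeasure (gaussMeasure E) :=
  ⟨by simp [gaussMeasure, lintegral_gaussDensity]⟩

lemma lintegral_exp_inner_gaussMeasure (w : E) :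
    ∫⁻ y, ENNReal.ofReal (Real.exp (inner ℝ w y)) ∂gaussMeasure E
      = ENNReal.ofReal (Real.exp (‖w‖ ^ 2 / (4 * Real.pi))) := by
  rw [gaussMeasure, lintegral_withDensity_eq_lintegral_mul _ measurable_gaussDensity (by fun_prop)]
  have key : ∀ y : E, gaussDensity y * ENNReal.ofReal (Real.exp (inner ℝ w y))
      = ENNReal.ofReal (Real.exp (‖w‖ ^ 2 / (4 * Real.pi)))
        * gaussDensity (y - (1 / (2 * Real.pi)) • w) := by
    intro y
    have := Real.pi_pos
    simp only [gaussDensity]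
    rw [← ENNReal.ofReal_mul (Real.exp_pos _).le, ← ENNReal.ofReal_mul (Real.exp_pos _).le,
      ← Real.exp_add, ← Real.exp_add, norm_sub_sq_real, inner_smul_right, norm_smul,
      real_inner_comm, Real.norm_of_nonneg (by positivity)]
    congr 2
    field_simp
    ring
  simp_rw [Pi.mul_apply, key]
  rw [lintegral_const_mul' _ _ ENNReal.ofReal_ne_top,
    lintegral_sub_right_eq_self (fun y => gaussDensity y), lintegral_gaussDensity, mul_one]

lemma abs_le_exp_add_exp_neg_div (s : ℝ) :
    |s| ≤ Real.exp (-1) * (Real.exp s + Real.exp (-s)) := by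
  have h1 := Real.add_one_le_exp (s - 1)
  have h2 := Real.add_one_le_exp (-s - 1)
  rw [mul_add, ← Real.exp_add, ← Real.exp_add, abs_le,
    show -1 + s = s - 1 by ring, show -1 + -s = -s - 1 by ring]
  have := Real.exp_pos (s - 1)
  have := Real.exp_pos (-s - 1)
  constructor <;> linarith

lemma exp_inv_pi_sub_one_le : Real.exp (1 / Real.pi - 1) ≤ 2 / Real.pi := by
  have hpi := Real.pi_pos
  have h1 := Real.add_one_le_exp (1 - 1 / Real.pi)
  have h2 : Real.pi / 2 ≤ 1 - 1 / Real.pi + 1 := by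
    have := Real.pi_gt_three
    have := Real.pi_lt_d2
    have : 1 / Real.pi ≤ 1 / 3 := one_div_le_one_div_of_le (by norm_num) (by linarith)
    linarith
  rw [show 1 / Real.pi - 1 = -(1 - 1 / Real.pi) by ring, Real.exp_neg,
    show 2 / Real.pi = (Real.pi / 2)⁻¹ by rw [inv_div]]
  exact inv_anti₀ (by positivity) (h2.trans h1)

lemma lintegral_enorm_apply_gaussMeasure_le (L : E →L[ℝ] ℝ) :
    ∫⁻ y, ‖L y‖ₑ ∂gaussMeasure E ≤ ENNReal.ofReal (2 / Real.pi) * ‖L‖ₑ := by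
  obtain ⟨a, rfl⟩ := (InnerProductSpace.toDual ℝ E).surjective L
  rcases eq_or_ne a 0 with rfl | ha
  · simp
  have hpi := Real.pi_pos
  have ha' : 0 < ‖a‖ := norm_pos_iff.2 ha
  set w : E := (2 / ‖a‖) • a with hw
  have hwn : ‖w‖ = 2 := by
    rw [hw, norm_smul, Real.norm_of_nonneg (by positivity)]; field_simp
  have hb : ∀ y, ‖InnerProductSpace.toDual ℝ E a y‖ₑ ≤
      ENNReal.ofReal (‖a‖ / 2 * Real.exp (-1)) * (ENNReal.ofReal (Real.exp (inner ℝ w y))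
        + ENNReal.ofReal (Real.exp (inner ℝ (-w) y))) := by
    intro y
    rw [← ENNReal.ofReal_add (Real.exp_pos _).le (Real.exp_pos _).le,
      ← ENNReal.ofReal_mul (by positivity), ← ofReal_norm]
    apply ENNReal.ofReal_le_ofReal
    rw [InnerProductSpace.toDual_apply_apply, Real.norm_eq_abs, inner_neg_left, mul_assoc]
    have h := abs_le_exp_add_exp_neg_div (inner ℝ w y)
    have e : inner ℝ a y = ‖a‖ / 2 * inner ℝ w y := by
      rw [hw, inner_smul_left]; simp; field_simp
    rw [e, abs_mul, abs_of_nonneg (by positivity)]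
    gcongr
  refine (lintegral_mono hb).trans ?_
  rw [lintegral_const_mul' _ _ ENNReal.ofReal_ne_top, lintegral_add_left (by fun_prop),
    lintegral_exp_inner_gaussMeasure, lintegral_exp_inner_gaussMeasure, norm_neg, hwn,
    ← ENNReal.ofReal_add (Real.exp_pos _).le (Real.exp_pos _).le,
    ← ENNReal.ofReal_mul (by positivity), ← ofReal_norm, LinearIsometryEquiv.norm_map,
    ← ENNReal.ofReal_mul (by positivity)]
  apply ENNReal.ofReal_le_ofReal
  have h := exp_inv_pi_sub_one_le
  rw [sub_eq_add_neg, Real.exp_add] at h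
  rw [show (2 : ℝ) ^ 2 / (4 * Real.pi) = 1 / Real.pi by field_simp; norm_num]
  nlinarith

/-- The rotation by angle `θ` in the product of a vector space with itself. -/
def prodRotation {E : Type*} [AddCommGroup E] [Module ℝ E] (θ : ℝ) : E × E →ₗ[ℝ] E × E where
  toFun z := (Real.cos θ • z.1 + Real.sin θ • z.2, -Real.sin θ • z.1 + Real.cos θ • z.2)
  map_add' x y := by ext <;> simp <;> abel
  map_smul' c x := by ext <;> simp [smul_comm c]

lemma abs_det_prodRotation {E : Type*} [AddCommGroup E] [Module ℝ E] (θ : ℝ) :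
    |LinearMap.det (prodRotation (E := E) θ)| = 1 := by
  set S : E × E →ₗ[ℝ] E × E :=
    { toFun := fun z => (z.1, -z.2)
      map_add' := fun x y => by ext <;> simp [add_comm]
      map_smul' := fun c x => by ext <;> simp } with hS
  have hinv : prodRotation (E := E) θ * (S * prodRotation θ * S) = 1 := by
    have h := Real.sin_sq_add_cos_sq θ
    refine LinearMap.ext fun z => Prod.ext ?_ ?_ <;>
    · simp [prodRotation, S, Module.End.mul_apply]
      match_scalars <;> nlinarith
  have hSS : S * S = 1 := by
    refine LinearMap.ext fun z => Prod.ext ?_ ?_ <;> simp [S, Module.End.mul_apply]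
  have h1 := congrArg LinearMap.det hinv
  have h2 := congrArg LinearMap.det hSS
  simp only [map_mul, map_one] at h1 h2
  have h3 : LinearMap.det (prodRotation (E := E) θ) ^ 2 = 1 := by
    calc _ = LinearMap.det (prodRotation (E := E) θ) ^ 2 * (LinearMap.det S * LinearMap.det S) := by
            rw [h2, mul_one]
      _ = 1 := by rw [← h1]; ring
  rcases sq_eq_one_iff.mp h3 with h | h <;> simp [h]

lemma measurePreserving_prodRotation (θ : ℝ) :
    MeasurePreserving (prodRotation (E := E) θ) ((gaussMeasure E).prod (gaussMeasure E))
      ((gaussMeasure E).prod (gaussMeasure E)) := by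
  have hm : Measurable (prodRotation (E := E) θ) :=
    (LinearMap.continuous_of_finiteDimensional _).measurable
  have hdet : LinearMap.det (prodRotation (E := E) θ) ≠ 0 := by
    intro h
    have := abs_det_prodRotation (E := E) θ
    simp [h] at this
  have hvol : MeasurePreserving (prodRotation (E := E) θ) (volume.prod volume)
      (volume.prod volume) := by
    refine ⟨hm, ?_⟩
    rw [Measure.map_linearMap_addHaar_eq_smul_addHaar _ hdet, abs_inv, abs_det_prodRotation]
    simp
  have hd : ∀ z : E × E, gaussDensity (prodRotation θ z).1 * gaussDensity (prodRotation θ z).2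
      = gaussDensity z.1 * gaussDensity z.2 := by
    intro z
    simp only [gaussDensity]
    rw [← ENNReal.ofReal_mul (Real.exp_pos _).le, ← ENNReal.ofReal_mul (Real.exp_pos _).le,
      ← Real.exp_add, ← Real.exp_add, ← mul_add, ← mul_add]
    congr 3
    simp only [prodRotation, LinearMap.coe_mk, AddHom.coe_mk]
    rw [norm_add_sq_real, norm_add_sq_real]
    simp only [norm_smul, inner_smul_left, inner_smul_right, Real.norm_eq_abs, mul_pow, sq_abs,
      norm_neg, neg_smul, inner_neg_left]
    simp
    linear_combination (‖z.1‖ ^ 2 + ‖z.2‖ ^ 2) * Real.sin_sq_add_cos_sq θ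
  have hmeas : Measurable fun z : E × E => gaussDensity z.1 * gaussDensity z.2 :=
    (measurable_gaussDensity.comp measurable_fst).mul (measurable_gaussDensity.comp measurable_snd)
  refine ⟨hm, ?_⟩
  rw [gaussMeasure, prod_withDensity measurable_gaussDensity measurable_gaussDensity]
  refine Measure.ext_of_lintegral _ fun f hf => ?_
  rw [lintegral_map hf hm, lintegral_withDensity_eq_lintegral_mul (volume.prod volume) hmeas
      (g := fun z => f (prodRotation θ z)) (hf.comp hm),
    lintegral_withDensity_eq_lintegral_mul _ hmeas hf, ← hvol.lintegral_comp (hmeas.mul hf)]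
  refine lintegral_congr fun z => ?_
  simp [hd]

lemma ofReal_sub_le_lintegral_enorm_deriv {f f' : ℝ → ℝ} {c k l : ℝ} (hc : 0 ≤ c)
    (hf : ContinuousOn f (Icc 0 c)) (hf' : Measurable f') {s : Set ℝ} (hs : s.Countable)
    (hd : ∀ x ∈ Ioo 0 c \ s, HasDerivAt f (f' x) x) (h0 : f 0 ≤ k) (h1 : l ≤ f c) :
    ENNReal.ofReal (l - k) ≤
      ∫⁻ x in Icc 0 c, (f ⁻¹' Ioo k l).indicator (fun x => ‖f' x‖ₑ) x := by
  have hA : IsCompact (Icc 0 c ∩ f ⁻¹' Iic k) :=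
    isCompact_Icc.of_isClosed_subset (hf.preimage_isClosed_of_isClosed isClosed_Icc isClosed_Iic)
      inter_subset_left
  obtain ⟨a, ⟨⟨ha0, hac⟩, hak⟩, hamax⟩ := hA.exists_isGreatest ⟨0, ⟨le_rfl, hc⟩, h0⟩
  have hB : IsCompact (Icc a c ∩ f ⁻¹' Ici l) :=
    isCompact_Icc.of_isClosed_subset
      ((hf.mono (Icc_subset_Icc_left ha0)).preimage_isClosed_of_isClosed isClosed_Icc isClosed_Ici)
      inter_subset_left
  obtain ⟨b, ⟨⟨hab, hbc⟩, hbl⟩, hbmin⟩ := hB.exists_isLeast ⟨c, ⟨hac, le_rfl⟩, h1⟩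
  simp only [mem_preimage, mem_Iic, mem_Ici] at hak hbl
  have hmid : ∀ x ∈ Ioo a b, f x ∈ Ioo k l := by
    intro x hx
    constructor
    · by_contra! h
      exact absurd (hamax ⟨⟨ha0.trans hx.1.le, hx.2.le.trans hbc⟩, h⟩) (not_le.2 hx.1)
    · by_contra! h
      exact absurd (hbmin ⟨⟨hx.1.le, hx.2.le.trans hbc⟩, h⟩) (not_le.2 hx.2)
  have hle : ∫⁻ x in Ioo a b, ‖f' x‖ₑ ≤
      ∫⁻ x in Icc 0 c, (f ⁻¹' Ioo k l).indicator (fun x => ‖f' x‖ₑ) x := by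
    calc _ = ∫⁻ x in Ioo a b, (f ⁻¹' Ioo k l).indicator (fun x => ‖f' x‖ₑ) x :=
          setLIntegral_congr_fun measurableSet_Ioo fun x hx => by
            rw [indicator_of_mem (s := f ⁻¹' Ioo k l) (hmid x hx)]
      _ ≤ _ := lintegral_mono_set (Ioo_subset_Icc_self.trans (Icc_subset_Icc ha0 hbc))
  refine le_trans ?_ hle
  rcases eq_or_ne (∫⁻ x in Ioo a b, ‖f' x‖ₑ) ⊤ with h | h
  · simp [h]
  have hint : IntegrableOn f' (Ioo a b) := ⟨hf'.aestronglyMeasurable, lt_top_iff_ne_top.2 h⟩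
  have hFTC := integral_eq_of_hasDerivAt_off_countable_of_le f f' hab hs
    (hf.mono (Icc_subset_Icc ha0 hbc))
    (fun x hx => hd x ⟨⟨ha0.trans_lt hx.1.1, hx.1.2.trans_le hbc⟩, hx.2⟩)
    ((intervalIntegrable_iff_integrableOn_Ioo_of_le hab).2 hint)
  calc ENNReal.ofReal (l - k) ≤ ENNReal.ofReal ‖∫ x in Ioo a b, f' x‖ := by
        apply ENNReal.ofReal_le_ofReal
        rw [intervalIntegral.integral_of_le hab, integral_Ioc_eq_integral_Ioo] at hFTC
        rw [hFTC, Real.norm_eq_abs]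
        exact le_trans (by linarith) (le_abs_self _)
    _ = ‖∫ x in Ioo a b, f' x‖ₑ := ofReal_norm _
    _ ≤ _ := enorm_integral_le_lintegral_enorm _

lemma subsingleton_setOf_cos_smul_add_sin_smul_eq_zero {E : Type*} [AddCommGroup E] [Module ℝ E]
    {x y : E} (h : ¬ (x = 0 ∧ y = 0)) :
    {θ ∈ Ioo 0 (Real.pi / 2) | Real.cos θ • x + Real.sin θ • y = 0}.Subsingleton := by
  rintro s ⟨hs, hs0⟩ t ⟨ht, ht0⟩
  by_contra hne
  apply h
  have hsin : Real.sin (t - s) ≠ 0 := by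
    intro h0
    rw [Real.sin_eq_zero_iff_of_lt_of_lt (by linarith [hs.1, hs.2, ht.1, ht.2])
      (by linarith [hs.1, hs.2, ht.1, ht.2])] at h0
    exact hne (by linarith)
  constructor
  · have : Real.sin (t - s) • x = 0 := by
      calc _ = Real.sin t • (Real.cos s • x + Real.sin s • y)
            - Real.sin s • (Real.cos t • x + Real.sin t • y) := by rw [Real.sin_sub]; module
        _ = 0 := by rw [hs0, ht0]; simp
    exact (smul_eq_zero.1 this).resolve_left hsin
  · have : Real.sin (t - s) • y = 0 := by
      calc _ = Real.cos s • (Real.cos t • x + Real.sin t • y)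
            - Real.cos t • (Real.cos s • x + Real.sin s • y) := by rw [Real.sin_sub]; module
        _ = 0 := by rw [hs0, ht0]; simp
    exact (smul_eq_zero.1 this).resolve_left hsin

/-- The derivative of `g` at the first component in the direction of the second one, restricted
to the points where `k < g < l`. -/
def slabDeriv (g : E → ℝ) (k l : ℝ) (z : E × E) : ENNReal :=
  (g ⁻¹' Ioo k l).indicator (fun x => ‖fderiv ℝ g x z.2‖ₑ) z.1

lemma measurable_slabDeriv {g : E → ℝ} (hg : Continuous g) (k l : ℝ) :
    Measurable (slabDeriv g k l) := by
  have h : Measurable fun z : E × E => ‖fderiv ℝ g z.1 z.2‖ₑ := by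
    have : ∀ z : E × E, fderiv ℝ g z.1 z.2 = inner ℝ (gradient g z.1) z.2 := fun z => by
      simp [gradient]
    simp_rw [this]
    have hgrad : Measurable (gradient g) :=
      (LinearIsometryEquiv.continuous _).measurable.comp (measurable_fderiv ℝ g)
    exact ((hgrad.comp measurable_fst).inner measurable_snd).enorm
  exact h.indicator ((hg.measurable measurableSet_Ioo).preimage measurable_fst)

lemma ofReal_sub_le_lintegral_slabDeriv {g : E → ℝ} (hg : Continuous g)
    (hg' : ∀ x ≠ 0, DifferentiableAt ℝ g x) {k l : ℝ} (hkl : k < l) {z : E × E}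
    (hz : g z.1 ≤ k ∧ l ≤ g z.2 ∨ l ≤ g z.1 ∧ g z.2 ≤ k) :
    ENNReal.ofReal (l - k) ≤
      ∫⁻ θ in Icc 0 (Real.pi / 2), slabDeriv g k l (prodRotation θ z) := by
  have hpi := Real.pi_pos
  have hz0 : ¬ (z.1 = 0 ∧ z.2 = 0) := by
    rintro ⟨h1, h2⟩
    rw [h1, h2] at hz
    rcases hz with hz | hz <;> linarith [hz.1, hz.2]
  set p : ℝ → E := fun θ => Real.cos θ • z.1 + Real.sin θ • z.2 with hp
  set q : ℝ → E := fun θ => -Real.sin θ • z.1 + Real.cos θ • z.2 with hq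
  have hpq : ∀ θ, HasDerivAt p (q θ) θ := fun θ =>
    ((Real.hasDerivAt_cos θ).smul_const _).add ((Real.hasDerivAt_sin θ).smul_const _)
  have hpc : Continuous p := by fun_prop
  have hqc : Continuous q := by fun_prop
  have hD : Measurable fun θ => fderiv ℝ g (p θ) (q θ) := by
    have : ∀ θ, fderiv ℝ g (p θ) (q θ) = inner ℝ (gradient g (p θ)) (q θ) := fun z => by
      simp [gradient]
    simp_rw [this]
    have hgrad : Measurable (gradient g) :=
      (LinearIsometryEquiv.continuous _).measurable.comp (measurable_fderiv ℝ g)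
    exact (hgrad.comp hpc.measurable).inner hqc.measurable
  have hderiv : ∀ θ ∈ Ioo 0 (Real.pi / 2) \ {θ ∈ Ioo 0 (Real.pi / 2) | p θ = 0},
      HasDerivAt (fun θ => g (p θ)) (fderiv ℝ g (p θ) (q θ)) θ := fun θ hθ =>
    (hg' (p θ) fun h => hθ.2 ⟨hθ.1, h⟩).hasFDerivAt.comp_hasDerivAt θ (hpq θ)
  have hs := (subsingleton_setOf_cos_smul_add_sin_smul_eq_zero hz0).countable
  have hslab : ∀ θ, slabDeriv g k l (prodRotation θ z)
      = ((fun θ => g (p θ)) ⁻¹' Ioo k l).indicator (fun θ => ‖fderiv ℝ g (p θ) (q θ)‖ₑ) θ :=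
    fun θ => rfl
  simp_rw [hslab]
  rcases hz with hz | hz
  · exact ofReal_sub_le_lintegral_enorm_deriv (by positivity) (hg.comp hpc).continuousOn hD hs
      hderiv (by simpa [p] using hz.1) (by simpa [p] using hz.2)
  · have := ofReal_sub_le_lintegral_enorm_deriv (f := fun θ => -g (p θ)) (c := Real.pi / 2)
      (k := -l) (l := -k) (by positivity) (hg.comp hpc).neg.continuousOn hD.neg hs
      (fun θ hθ => (hderiv θ hθ).neg)
      (by simpa [p] using hz.1) (by simpa [p] using hz.2)
    rw [neg_sub_neg] at this
    refine this.trans_eq (lintegral_congr fun θ => ?_)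
    by_cases h : g (p θ) ∈ Ioo k l
    · rw [indicator_of_mem (s := (fun θ => g (p θ)) ⁻¹' Ioo k l) h, indicator_of_mem]
      · simp
      · exact ⟨neg_lt_neg h.2, neg_lt_neg h.1⟩
    · rw [indicator_of_notMem (s := (fun θ => g (p θ)) ⁻¹' Ioo k l) h, indicator_of_notMem]
      exact fun h' => h ⟨neg_lt_neg_iff.1 h'.2, neg_lt_neg_iff.1 h'.1⟩

/-- A Gaussian isoperimetric-type inequality: the derivative of a function over the slab
`{k < g < l}` controls the product of the measures of `{g ≤ k}` and `{l ≤ g}`. -/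
theorem two_mul_gaussMeasure_mul_le {g : E → ℝ} (hg : Continuous g)
    (hg' : ∀ x ≠ 0, DifferentiableAt ℝ g x) {k l : ℝ} (hkl : k < l) :
    2 * (ENNReal.ofReal (l - k) * (gaussMeasure E (g ⁻¹' Iic k) * gaussMeasure E (g ⁻¹' Ici l)))
      ≤ ∫⁻ x in g ⁻¹' Ioo k l, ‖fderiv ℝ g x‖ₑ ∂gaussMeasure E := by
  set γ := gaussMeasure E
  set A := g ⁻¹' Iic k
  set C := g ⁻¹' Ici l
  have hA : MeasurableSet A := hg.measurable measurableSet_Iic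
  have hC : MeasurableSet C := hg.measurable measurableSet_Ici
  have hM : MeasurableSet (g ⁻¹' Ioo k l) := hg.measurable measurableSet_Ioo
  have hpi := Real.pi_pos
  have hmeas := measurable_slabDeriv hg k l
  have hdisj : Disjoint (A ×ˢ C) (C ×ˢ A) := by
    rw [Set.disjoint_left]
    rintro z ⟨hz1, -⟩ ⟨hz2, -⟩
    exact absurd (hz2.trans hz1) (not_le.2 hkl)
  have hrot : Measurable fun w : (E × E) × ℝ => prodRotation w.2 w.1 := by
    apply Continuous.measurable
    simp only [prodRotation, LinearMap.coe_mk, AddHom.coe_mk]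
    fun_prop
  have hG : ∫⁻ z, slabDeriv g k l z ∂γ.prod γ
      ≤ ENNReal.ofReal (2 / Real.pi) * ∫⁻ x in g ⁻¹' Ioo k l, ‖fderiv ℝ g x‖ₑ ∂γ := by
    rw [lintegral_prod _ hmeas.aemeasurable, ← lintegral_const_mul' _ _ ENNReal.ofReal_ne_top,
      ← lintegral_indicator hM]
    refine lintegral_mono fun x => ?_
    by_cases hx : x ∈ g ⁻¹' Ioo k l
    · simpa [slabDeriv, hx] using lintegral_enorm_apply_gaussMeasure_le (fderiv ℝ g x)
    · simp [slabDeriv, hx]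
  calc 2 * (ENNReal.ofReal (l - k) * (γ A * γ C))
      = ENNReal.ofReal (l - k) * γ.prod γ (A ×ˢ C ∪ C ×ˢ A) := by
        rw [measure_union hdisj (hC.prod hA), Measure.prod_prod, Measure.prod_prod,
          mul_comm (γ C)]
        ring
    _ = ∫⁻ _ in A ×ˢ C ∪ C ×ˢ A, ENNReal.ofReal (l - k) ∂γ.prod γ := by
        rw [setLIntegral_const]
    _ ≤ ∫⁻ z in A ×ˢ C ∪ C ×ˢ A,
          (∫⁻ θ in Icc 0 (Real.pi / 2), slabDeriv g k l (prodRotation θ z)) ∂γ.prod γ := by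
        refine setLIntegral_mono' ((hA.prod hC).union (hC.prod hA)) fun z hz => ?_
        exact ofReal_sub_le_lintegral_slabDeriv hg hg' hkl hz
    _ ≤ ∫⁻ z, (∫⁻ θ in Icc 0 (Real.pi / 2), slabDeriv g k l (prodRotation θ z)) ∂γ.prod γ :=
        setLIntegral_le_lintegral _ _
    _ = ∫⁻ θ in Icc 0 (Real.pi / 2), ∫⁻ z, slabDeriv g k l (prodRotation θ z) ∂γ.prod γ :=
        lintegral_lintegral_swap
          (f := fun z θ => slabDeriv g k l (prodRotation θ z)) (hmeas.comp hrot).aemeasurable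
    _ = ∫⁻ _ in Icc 0 (Real.pi / 2), ∫⁻ z, slabDeriv g k l z ∂γ.prod γ :=
        lintegral_congr fun θ => (measurePreserving_prodRotation θ).lintegral_comp hmeas
    _ = ENNReal.ofReal (Real.pi / 2) * ∫⁻ z, slabDeriv g k l z ∂γ.prod γ := by
        rw [setLIntegral_const, Real.volume_Icc, sub_zero, mul_comm]
    _ ≤ ENNReal.ofReal (Real.pi / 2) * (ENNReal.ofReal (2 / Real.pi) *
          ∫⁻ x in g ⁻¹' Ioo k l, ‖fderiv ℝ g x‖ₑ ∂γ) := by gcongr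
    _ = _ := by
        rw [← mul_assoc, ← ENNReal.ofReal_mul (by positivity),
          show Real.pi / 2 * (2 / Real.pi) = 1 by field_simp, ENNReal.ofReal_one, one_mul]

end Gaussian

section Radial

/-- The mass function of the Gaussian measure in polar coordinates: up to the volume of the unit
ball, the Gaussian measure of the ball of radius `ρ` in dimension `d`. -/
def radialMass (d : ℕ) (ρ : ℝ) : ℝ :=
  d * ∫ t in (0 : ℝ)..ρ, t ^ (d - 1) * Real.exp (-Real.pi * t ^ 2)

/-- The radial profile of the monotone transport from the Gaussian measure to the uniform measure
on the ball of volume one. -/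
def radialProfile (d : ℕ) (ρ : ℝ) : ℝ := radialMass d ρ ^ ((1 : ℝ) / d)

variable {d : ℕ}

lemma hasDerivAt_radialMass (d : ℕ) (ρ : ℝ) :
    HasDerivAt (radialMass d) (d * (ρ ^ (d - 1) * Real.exp (-Real.pi * ρ ^ 2))) ρ := by
  have hc : Continuous fun t : ℝ => t ^ (d - 1) * Real.exp (-Real.pi * t ^ 2) := by fun_prop
  exact (hc.integral_hasStrictDerivAt 0 ρ).hasDerivAt.const_mul _

lemma continuous_radialMass (d : ℕ) : Continuous (radialMass d) :=
  continuous_iff_continuousAt.2 fun ρ => (hasDerivAt_radialMass d ρ).continuousAt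

lemma radialMass_zero (d : ℕ) : radialMass d 0 = 0 := by simp [radialMass]

lemma strictMonoOn_radialMass (hd : d ≠ 0) : StrictMonoOn (radialMass d) (Ici 0) := by
  refine strictMonoOn_of_deriv_pos (convex_Ici 0) (continuous_radialMass d).continuousOn ?_
  intro x hx
  rw [interior_Ici] at hx
  have hx : 0 < x := hx
  rw [(hasDerivAt_radialMass d x).deriv]
  positivity

lemma radialMass_pos (hd : d ≠ 0) {ρ : ℝ} (hρ : 0 < ρ) : 0 < radialMass d ρ := by
  have := strictMonoOn_radialMass hd self_mem_Ici hρ.le hρ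
  rwa [radialMass_zero] at this

lemma natCast_mul_integral_pow_pred (hd : d ≠ 0) (ρ : ℝ) :
    d * ∫ t in (0 : ℝ)..ρ, t ^ (d - 1) = ρ ^ d := by
  have h : d - 1 + 1 = d := Nat.succ_pred hd
  have h' : ((d - 1 : ℕ) : ℝ) + 1 = d := by exact_mod_cast h
  rw [integral_pow, h, h', zero_pow hd]
  field_simp
  ring

lemma radialMass_le (hd : d ≠ 0) {ρ : ℝ} (hρ : 0 ≤ ρ) : radialMass d ρ ≤ ρ ^ d := by
  rw [← natCast_mul_integral_pow_pred hd, radialMass]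
  gcongr
  refine intervalIntegral.integral_mono_on hρ (Continuous.intervalIntegrable (by fun_prop) _ _)
    (Continuous.intervalIntegrable (by fun_prop) _ _) fun t ht => ?_
  have : Real.exp (-Real.pi * t ^ 2) ≤ 1 := Real.exp_le_one_iff.2 (by
    have := Real.pi_pos; nlinarith [sq_nonneg t])
  exact mul_le_of_le_one_right (pow_nonneg ht.1 _) this

lemma le_radialMass (hd : d ≠ 0) {ρ : ℝ} (hρ : 0 ≤ ρ) :
    ρ ^ d * Real.exp (-Real.pi * ρ ^ 2) ≤ radialMass d ρ := by
  rw [← natCast_mul_integral_pow_pred hd, radialMass, mul_assoc,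
    ← intervalIntegral.integral_mul_const]
  gcongr
  refine intervalIntegral.integral_mono_on hρ (Continuous.intervalIntegrable (by fun_prop) _ _)
    (Continuous.intervalIntegrable (by fun_prop) _ _) fun t ht => ?_
  have h0 := ht.1
  refine mul_le_mul_of_nonneg_left (Real.exp_le_exp.2 ?_) (pow_nonneg h0 _)
  have := Real.pi_pos
  have : t ^ 2 ≤ ρ ^ 2 := by gcongr; exact ht.2
  nlinarith

lemma radialProfile_zero (hd : d ≠ 0) : radialProfile d 0 = 0 := by
  rw [radialProfile, radialMass_zero, Real.zero_rpow (by positivity)]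

lemma radialProfile_pos (hd : d ≠ 0) {ρ : ℝ} (hρ : 0 < ρ) : 0 < radialProfile d ρ :=
  Real.rpow_pos_of_pos (radialMass_pos hd hρ) _

lemma radialProfile_pow (hd : d ≠ 0) {ρ : ℝ} (hρ : 0 < ρ) :
    radialProfile d ρ ^ d = radialMass d ρ := by
  rw [radialProfile, one_div, Real.rpow_inv_natCast_pow (radialMass_pos hd hρ).le hd]

lemma radialProfile_le (hd : d ≠ 0) {ρ : ℝ} (hρ : 0 ≤ ρ) : radialProfile d ρ ≤ ρ := by
  rcases hρ.eq_or_lt with rfl | hρ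
  · rw [radialProfile_zero hd]
  · rw [← pow_le_pow_iff_left₀ (radialProfile_pos hd hρ).le hρ.le hd, radialProfile_pow hd hρ]
    exact radialMass_le hd hρ.le

lemma hasDerivAt_radialProfile (hd : d ≠ 0) {ρ : ℝ} (hρ : 0 < ρ) :
    HasDerivAt (radialProfile d)
      (ρ ^ (d - 1) * Real.exp (-Real.pi * ρ ^ 2) / radialProfile d ρ ^ (d - 1)) ρ := by
  have hI := radialMass_pos hd hρ
  refine ((hasDerivAt_radialMass d ρ).rpow_const (p := (1 : ℝ) / d) (Or.inl hI.ne')).congr_deriv ?_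
  have hd' : (d : ℝ) ≠ 0 := by exact_mod_cast hd
  rw [Real.rpow_sub_one hI.ne', ← radialProfile]
  have hJ := (radialProfile_pos hd hρ).ne'
  have h1 : radialMass d ρ = radialProfile d ρ ^ (d - 1) * radialProfile d ρ := by
    rw [← radialProfile_pow hd hρ, pow_sub_one_mul hd]
  rw [h1]
  field_simp

lemma lipschitzOnWith_radialProfile (hd : d ≠ 0) :
    LipschitzOnWith 1 (radialProfile d) (Ioi 0) := by
  refine (convex_Ioi 0).lipschitzOnWith_of_nnnorm_hasDerivWithin_le
    (fun ρ hρ => (hasDerivAt_radialProfile hd hρ).hasDerivWithinAt) fun ρ hρ => ?_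
  have hρ : 0 < ρ := hρ
  have hJ := radialProfile_pos hd hρ
  rw [← NNReal.coe_le_coe, coe_nnnorm, NNReal.coe_one, Real.norm_of_nonneg (by positivity),
    div_le_one (by positivity)]
  refine le_of_mul_le_mul_right ?_ hρ
  calc ρ ^ (d - 1) * Real.exp (-Real.pi * ρ ^ 2) * ρ
      = ρ ^ d * Real.exp (-Real.pi * ρ ^ 2) := by rw [← pow_sub_one_mul hd ρ]; ring
    _ ≤ radialProfile d ρ ^ (d - 1) * radialProfile d ρ := by
        rw [pow_sub_one_mul hd, radialProfile_pow hd hρ]; exact le_radialMass hd hρ.le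
    _ ≤ _ := by gcongr; exact radialProfile_le hd hρ.le

lemma strictMonoOn_radialProfile (hd : d ≠ 0) : StrictMonoOn (radialProfile d) (Ioi 0) :=
  fun _ hx _ hy hxy => Real.rpow_lt_rpow (radialMass_pos hd hx).le
    (strictMonoOn_radialMass hd (Ioi_subset_Ici_self hx) (Ioi_subset_Ici_self hy) hxy) (by positivity)

lemma tendsto_radialMass (hd : d ≠ 0) :
    Filter.Tendsto (radialMass d) Filter.atTop
      (nhds (volume.real (ball (0 : Euc d) 1))⁻¹) := by
  have : Nonempty (Fin d) := ⟨⟨0, Nat.pos_of_ne_zero hd⟩⟩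
  have hint : IntegrableOn (fun t : ℝ => t ^ (d - 1) * Real.exp (-Real.pi * t ^ 2)) (Ioi 0) := by
    simpa using (integrable_fun_norm_addHaar (volume : Measure (Euc d))
      (f := fun t => Real.exp (-Real.pi * t ^ 2))).1 integrable_exp_neg_pi_mul_sq_norm
  have h1 := integral_fun_norm_addHaar (volume : Measure (Euc d))
    (fun t => Real.exp (-Real.pi * t ^ 2))
  rw [integral_exp_neg_pi_mul_sq_norm, finrank_euclideanSpace_fin] at h1
  simp only [smul_eq_mul, nsmul_eq_mul] at h1
  have hω : volume.real (ball (0 : Euc d) 1) ≠ 0 := fun h => by simp [h] at h1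
  have h2 := (intervalIntegral_tendsto_integral_Ioi 0 hint Filter.tendsto_id).const_mul (d : ℝ)
  have hval : (volume.real (ball (0 : Euc d) 1))⁻¹
      = d * ∫ t in Ioi (0 : ℝ), t ^ (d - 1) * Real.exp (-Real.pi * t ^ 2) :=
    inv_eq_of_mul_eq_one_right (by rw [mul_left_comm]; exact h1.symm)
  rw [hval]
  exact h2

variable (d) in
/-- The radius of the ball of volume one in dimension `d`. -/
def unitVolumeRadius : ℝ := (volume.real (ball (0 : Euc d) 1))⁻¹ ^ ((1 : ℝ) / d)

lemma volume_real_unitBall_pos (d : ℕ) : 0 < volume.real (ball (0 : Euc d) 1) :=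
  ENNReal.toReal_pos (measure_ball_pos _ _ one_pos).ne' measure_ball_lt_top.ne

lemma unitVolumeRadius_pos (d : ℕ) : 0 < unitVolumeRadius d :=
  Real.rpow_pos_of_pos (inv_pos.2 (volume_real_unitBall_pos d)) _

lemma unitVolumeRadius_pow (hd : d ≠ 0) :
    unitVolumeRadius d ^ d = (volume.real (ball (0 : Euc d) 1))⁻¹ := by
  rw [unitVolumeRadius, one_div, Real.rpow_inv_natCast_pow
    (inv_pos.2 (volume_real_unitBall_pos d)).le hd]

lemma image_radialProfile (hd : d ≠ 0) :
    radialProfile d '' Ioi 0 = Ioo 0 (unitVolumeRadius d) := by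
  have hlim := tendsto_radialMass hd
  apply Subset.antisymm
  · rintro _ ⟨ρ, hρ, rfl⟩
    have hρ : 0 < ρ := hρ
    refine ⟨radialProfile_pos hd hρ, Real.rpow_lt_rpow (radialMass_pos hd hρ).le ?_
      (by positivity)⟩
    refine (strictMonoOn_radialMass hd (mem_Ici.2 hρ.le) (mem_Ici.2 (by linarith : 0 ≤ ρ + 1))
      (lt_add_one ρ)).trans_le (ge_of_tendsto hlim ?_)
    filter_upwards [Filter.eventually_ge_atTop (ρ + 1)] with b hb
    exact (strictMonoOn_radialMass hd).monotoneOn (mem_Ici.2 (by linarith))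
      (mem_Ici.2 (by linarith)) hb
  · rintro y ⟨hy0, hy⟩
    have hyd : y ^ d < (volume.real (ball (0 : Euc d) 1))⁻¹ := by
      rw [← unitVolumeRadius_pow hd]
      exact pow_lt_pow_left₀ hy hy0.le hd
    obtain ⟨b, hb, hb0⟩ := ((hlim.eventually (lt_mem_nhds hyd)).and
      (Filter.eventually_ge_atTop 0)).exists
    obtain ⟨ρ, hρ, hρy⟩ := intermediate_value_Icc hb0 (continuous_radialMass d).continuousOn
      ⟨by rw [radialMass_zero]; positivity, hb.le⟩
    have hρ0 : ρ ≠ 0 := by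
      rintro rfl
      rw [radialMass_zero] at hρy
      exact (pow_pos hy0 d).ne hρy
    refine ⟨ρ, lt_of_le_of_ne hρ.1 hρ0.symm, ?_⟩
    rw [radialProfile, hρy, one_div, Real.pow_rpow_inv_natCast hy0.le hd]

/-- The radial map transporting the Gaussian measure to the uniform measure on the ball of
volume one. -/
def radialTransport (d : ℕ) (x : Euc d) : Euc d := (radialProfile d ‖x‖ / ‖x‖) • x

lemma norm_radialTransport (hd : d ≠ 0) (x : Euc d) :
    ‖radialTransport d x‖ = radialProfile d ‖x‖ := by
  rcases eq_or_ne x 0 with rfl | hx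
  · simp [radialTransport, radialProfile_zero hd]
  · have hx' := norm_pos_iff.2 hx
    have := radialProfile_pos hd hx'
    rw [radialTransport, norm_smul, Real.norm_of_nonneg (by positivity)]
    field_simp

lemma radialTransport_mem_ball (hd : d ≠ 0) (x : Euc d) :
    radialTransport d x ∈ ball (0 : Euc d) (unitVolumeRadius d) := by
  rw [mem_ball_zero_iff, norm_radialTransport hd]
  rcases eq_or_ne x 0 with rfl | hx
  · rw [norm_zero, radialProfile_zero hd]
    exact unitVolumeRadius_pos d
  · exact ((image_radialProfile hd).subset (mem_image_of_mem _ (norm_pos_iff.2 hx))).2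

lemma lipschitzWith_radialTransport (hd : d ≠ 0) : LipschitzWith 1 (radialTransport d) := by
  have h0 : radialTransport d 0 = 0 := by simp [radialTransport]
  refine LipschitzWith.of_dist_le_mul fun x y => ?_
  rw [NNReal.coe_one, one_mul]
  rcases eq_or_ne x 0 with rfl | hx
  · rw [h0, dist_zero_left, dist_zero_left, norm_radialTransport hd]
    exact radialProfile_le hd (norm_nonneg _)
  rcases eq_or_ne y 0 with rfl | hy
  · rw [h0, dist_zero_right, dist_zero_right, norm_radialTransport hd]
    exact radialProfile_le hd (norm_nonneg _)
  have hx' := norm_pos_iff.2 hx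
  have hy' := norm_pos_iff.2 hy
  have hlip := (lipschitzOnWith_radialProfile hd).dist_le_mul _ hx' _ hy'
  rw [NNReal.coe_one, one_mul, Real.dist_eq, Real.dist_eq] at hlip
  have hlip2 := sq_le_sq.2 hlip
  have hsx := radialProfile_pos hd hx'
  have hsy := radialProfile_pos hd hy'
  have hsx' := radialProfile_le hd hx'.le
  have hsy' := radialProfile_le hd hy'.le
  have hxy := real_inner_le_norm x y
  rw [dist_eq_norm, dist_eq_norm, ← sq_le_sq₀ (norm_nonneg _) (norm_nonneg _), norm_sub_sq_real,
    norm_sub_sq_real, norm_radialTransport hd, norm_radialTransport hd, radialTransport,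
    radialTransport, inner_smul_left, inner_smul_right]
  simp only [conj_trivial]
  set a := ‖x‖
  set b := ‖y‖
  set s := radialProfile d a
  set t := radialProfile d b
  obtain ⟨c, hc⟩ : ∃ c, inner ℝ x y = a * b * c := ⟨inner ℝ x y / (a * b), by field_simp⟩
  have hc1 : c ≤ 1 := by
    rw [hc] at hxy
    exact le_of_mul_le_mul_left (by linarith) (mul_pos hx' hy')
  rw [hc, show s / a * (t / b * (a * b * c)) = s * t * c by field_simp]
  have hst : s * t ≤ a * b := by gcongr
  nlinarith

lemma differentiableAt_radialTransport (hd : d ≠ 0) {x : Euc d} (hx : x ≠ 0) :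
    DifferentiableAt ℝ (radialTransport d) x := by
  have hn : DifferentiableAt ℝ (fun x : Euc d => ‖x‖) x :=
    (contDiffAt_norm ℝ hx (n := 1)).differentiableAt one_ne_zero
  have hJ : DifferentiableAt ℝ (fun x : Euc d => radialProfile d ‖x‖) x :=
    (hasDerivAt_radialProfile hd (norm_pos_iff.2 hx)).differentiableAt.comp x hn
  exact (hJ.mul (hn.inv (norm_ne_zero_iff.2 hx))).smul differentiableAt_id

lemma lintegral_eq_lintegral_toSphere {E : Type*} [NormedAddCommGroup E] [NormedSpace ℝ E]
    [FiniteDimensional ℝ E] [Nontrivial E] [MeasurableSpace E] [BorelSpace E] (μ : Measure E)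
    [μ.IsAddHaarMeasure] {h : E → ENNReal} (hh : Measurable h) :
    ∫⁻ x, h x ∂μ = ∫⁻ ω, (∫⁻ r in Ioi (0 : ℝ),
      ENNReal.ofReal (r ^ (Module.finrank ℝ E - 1)) * h (r • (ω : E))) ∂μ.toSphere := by
  have hm : Measurable fun p : sphere (0 : E) 1 × Ioi (0 : ℝ) => h ((p.2 : ℝ) • (p.1 : E)) :=
    hh.comp (Continuous.measurable (by fun_prop))
  calc ∫⁻ x, h x ∂μ = ∫⁻ x : ({0}ᶜ : Set E), h x ∂μ.comap (↑) := by
        rw [lintegral_subtype_comap (measurableSet_singleton _).compl, restrict_compl_singleton]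
    _ = ∫⁻ x : ({0}ᶜ : Set E), (fun p : sphere (0 : E) 1 × Ioi (0 : ℝ) =>
          h ((p.2 : ℝ) • (p.1 : E))) (homeomorphUnitSphereProd E x) ∂μ.comap (↑) := by
        refine lintegral_congr fun x => ?_
        have : ‖(x : E)‖ ≠ 0 := norm_ne_zero_iff.2 x.2
        simp [smul_smul, this]
    _ = _ := by
        rw [μ.measurePreserving_homeomorphUnitSphereProd.lintegral_comp hm,
          lintegral_prod _ hm.aemeasurable]
        refine lintegral_congr fun ω => ?_
        have hω : Measurable fun r : Ioi (0 : ℝ) => h ((r : ℝ) • (ω : E)) :=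
          hh.comp (Continuous.measurable (by fun_prop))
        rw [Measure.volumeIoiPow, lintegral_withDensity_eq_lintegral_mul _ (by fun_prop) hω]
        exact lintegral_subtype_comap measurableSet_Ioi
          (fun r : ℝ => ENNReal.ofReal (r ^ (Module.finrank ℝ E - 1)) * h (r • (ω : E)))

theorem lintegral_comp_radialTransport (hd : d ≠ 0) {h : Euc d → ENNReal} (hh : Measurable h) :
    ∫⁻ x, h (radialTransport d x) ∂gaussMeasure (Euc d)
      = ∫⁻ y in ball (0 : Euc d) (unitVolumeRadius d), h y := by
  have : Nonempty (Fin d) := ⟨⟨0, Nat.pos_of_ne_zero hd⟩⟩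
  have hT : Measurable fun x => h (radialTransport d x) :=
    hh.comp (lipschitzWith_radialTransport hd).continuous.measurable
  rw [gaussMeasure, lintegral_withDensity_eq_lintegral_mul _ measurable_gaussDensity hT,
    ← lintegral_indicator measurableSet_ball,
    lintegral_eq_lintegral_toSphere _ (measurable_gaussDensity.mul hT),
    lintegral_eq_lintegral_toSphere _ (hh.indicator measurableSet_ball),
    finrank_euclideanSpace_fin]
  refine lintegral_congr fun ω => ?_
  have hω : ‖(ω : Euc d)‖ = 1 := norm_eq_of_mem_sphere ω
  have h1 : ∀ r ∈ Ioi (0 : ℝ), ENNReal.ofReal (r ^ (d - 1)) *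
        (gaussDensity * fun x => h (radialTransport d x) : Euc d → ENNReal) (r • (ω : Euc d))
      = ENNReal.ofReal |r ^ (d - 1) * Real.exp (-Real.pi * r ^ 2) / radialProfile d r ^ (d - 1)|
        * (ENNReal.ofReal (radialProfile d r ^ (d - 1)) * h (radialProfile d r • (ω : Euc d))) := by
    intro r hr
    have hr : 0 < r := hr
    have hJ := radialProfile_pos hd hr
    have hn : ‖r • (ω : Euc d)‖ = r := by rw [norm_smul, hω, mul_one, Real.norm_of_nonneg hr.le]
    have hTr : radialTransport d (r • (ω : Euc d)) = radialProfile d r • (ω : Euc d) := by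
      rw [radialTransport, hn, smul_smul, div_mul_cancel₀ _ hr.ne']
    rw [Pi.mul_apply, hTr, gaussDensity, hn, ← mul_assoc, ← mul_assoc,
      ← ENNReal.ofReal_mul (by positivity), ← ENNReal.ofReal_mul (by positivity),
      abs_of_nonneg (by positivity), div_mul_cancel₀ _ (by positivity)]
  have h2 : ∀ r ∈ Ioi (0 : ℝ), ENNReal.ofReal (r ^ (d - 1)) *
        (ball (0 : Euc d) (unitVolumeRadius d)).indicator h (r • (ω : Euc d))
      = (Ioo 0 (unitVolumeRadius d)).indicator
          (fun r => ENNReal.ofReal (r ^ (d - 1)) * h (r • (ω : Euc d))) r := by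
    intro r hr
    have hr : 0 < r := hr
    have hn : ‖r • (ω : Euc d)‖ = r := by rw [norm_smul, hω, mul_one, Real.norm_of_nonneg hr.le]
    by_cases hlt : r < unitVolumeRadius d
    · rw [indicator_of_mem (by simpa [hn] using hlt), indicator_of_mem (mem_Ioo.2 ⟨hr, hlt⟩)]
    · rw [indicator_of_notMem (by simpa [hn] using hlt), indicator_of_notMem fun h => hlt h.2,
        mul_zero]
  rw [setLIntegral_congr_fun measurableSet_Ioi h1, setLIntegral_congr_fun measurableSet_Ioi h2,
    ← lintegral_image_eq_lintegral_abs_deriv_mul measurableSet_Ioi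
      (fun r hr => (hasDerivAt_radialProfile hd hr).hasDerivWithinAt)
      (strictMonoOn_radialProfile hd).injOn
      (fun r => ENNReal.ofReal (r ^ (d - 1)) * h (r • (ω : Euc d))),
    image_radialProfile hd, setLIntegral_indicator measurableSet_Ioo,
    inter_eq_left.2 Ioo_subset_Ioi_self]

end Radial

section Ball

variable {d : ℕ}

lemma volume_real_unitBall_le (d : ℕ) : volume.real (ball (0 : Euc d) 1) ≤ 2 ^ d := by
  have hsub : ball (0 : Euc d) 1 ⊆ WithLp.ofLp ⁻¹' (ball (0 : Fin d → ℝ) 1) := by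
    intro x hx
    rw [mem_ball_zero_iff] at hx
    rw [mem_preimage, mem_ball_zero_iff, pi_norm_lt_iff one_pos]
    exact fun i => (PiLp.norm_apply_le x i).trans_lt hx
  have h := measure_mono (μ := volume) hsub
  rw [(PiLp.volume_preserving_ofLp (Fin d)).measure_preimage measurableSet_ball.nullMeasurableSet,
    Real.volume_pi_ball _ one_pos, Fintype.card_fin, mul_one] at h
  exact ENNReal.toReal_le_of_le_ofReal (by positivity) h

lemma half_le_unitVolumeRadius (hd : d ≠ 0) : 1 / 2 ≤ unitVolumeRadius d := by
  rw [← pow_le_pow_iff_left₀ (by norm_num) (unitVolumeRadius_pos d).le hd,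
    unitVolumeRadius_pow hd, div_pow, one_pow, one_div]
  exact inv_anti₀ (volume_real_unitBall_pos d) (volume_real_unitBall_le d)

/-- The dilation of the radial transport sends the Gaussian measure to the normalized uniform
measure on a ball. -/
lemma smul_map_radialTransport (hd : d ≠ 0) {c : ℝ} (hc : 0 < c) :
    ENNReal.ofReal (c ^ d) • (gaussMeasure (Euc d)).map (fun x => c • radialTransport d x)
      = volume.restrict (ball (0 : Euc d) (c * unitVolumeRadius d)) := by
  have hT : Measurable fun x => c • radialTransport d x :=
    (lipschitzWith_radialTransport hd).continuous.measurable.const_smul c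
  refine Measure.ext_of_lintegral _ fun h hh => ?_
  have hind : Measurable fun x => (ball 0 (c * unitVolumeRadius d)).indicator h x :=
    hh.indicator measurableSet_ball
  rw [lintegral_smul_measure, lintegral_map hh hT,
    lintegral_comp_radialTransport hd (h := fun y => h (c • y)) (hh.comp (measurable_const_smul c)),
    ← lintegral_indicator measurableSet_ball, ← lintegral_indicator measurableSet_ball]
  have hmap := Measure.map_addHaar_smul (volume : Measure (Euc d)) hc.ne'
  rw [finrank_euclideanSpace_fin, abs_of_nonneg (by positivity)] at hmap
  have hcomp : ∀ y, (ball (0 : Euc d) (unitVolumeRadius d)).indicator (fun y => h (c • y)) y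
      = (ball (0 : Euc d) (c * unitVolumeRadius d)).indicator h (c • y) := by
    intro y
    have : y ∈ ball (0 : Euc d) (unitVolumeRadius d) ↔
        c • y ∈ ball (0 : Euc d) (c * unitVolumeRadius d) := by
      rw [mem_ball_zero_iff, mem_ball_zero_iff, norm_smul, Real.norm_of_nonneg hc.le,
        mul_lt_mul_iff_right₀ hc]
    by_cases hy : y ∈ ball (0 : Euc d) (unitVolumeRadius d)
    · rw [indicator_of_mem hy, indicator_of_mem (this.1 hy)]
    · rw [indicator_of_notMem hy, indicator_of_notMem (mt this.2 hy)]
  simp_rw [hcomp]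
  rw [← lintegral_map hind (measurable_const_smul c), hmap, lintegral_smul_measure, smul_eq_mul,
    smul_eq_mul, ← mul_assoc, ← ENNReal.ofReal_mul (by positivity),
    mul_inv_cancel₀ (by positivity), ENNReal.ofReal_one, one_mul]

/-- The `L¹` form of the intermediate value lemma. -/
theorem ofReal_sub_mul_volume_mul_volume_le (hd : d ≠ 0) {R : ℝ} (hR : 0 < R) {u : Euc d → ℝ}
    (hu : DifferentiableOn ℝ u (ball 0 R)) {k l : ℝ} (hkl : k < l) :
    ENNReal.ofReal (l - k) * volume {x ∈ ball (0 : Euc d) R | u x ≤ k}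
        * volume {x ∈ ball (0 : Euc d) R | l ≤ u x}
      ≤ ENNReal.ofReal R * volume (ball (0 : Euc d) R)
        * ∫⁻ x in {x ∈ ball (0 : Euc d) R | k < u x ∧ u x < l}, ‖fderiv ℝ u x‖ₑ := by
  have : Nonempty (Fin d) := ⟨⟨0, Nat.pos_of_ne_zero hd⟩⟩
  have hr := unitVolumeRadius_pos d
  set c := R / unitVolumeRadius d with hcdef
  have hc : 0 < c := by positivity
  have hcR : c * unitVolumeRadius d = R := div_mul_cancel₀ _ hr.ne'
  have hc2 : c ≤ 2 * R := by
    rw [hcdef, div_le_iff₀ hr]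
    nlinarith [half_le_unitVolumeRadius hd]
  have hmap := smul_map_radialTransport hd hc
  rw [hcR] at hmap
  set S : Euc d → Euc d := fun x => c • radialTransport d x with hS
  have hSlip : LipschitzWith c.toNNReal S := by
    refine LipschitzWith.of_dist_le_mul fun x y => ?_
    rw [hS, dist_smul₀, Real.norm_of_nonneg hc.le, Real.coe_toNNReal _ hc.le]
    gcongr
    simpa using (lipschitzWith_radialTransport hd).dist_le_mul x y
  have hSball : ∀ x, S x ∈ ball (0 : Euc d) R := by
    intro x
    have := radialTransport_mem_ball hd x
    rw [mem_ball_zero_iff] at this ⊢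
    rw [hS, norm_smul, Real.norm_of_nonneg hc.le, ← hcR]
    gcongr
  have hSm : Measurable S := hSlip.continuous.measurable
  have huS : Continuous (u ∘ S) := hu.continuousOn.comp_continuous hSlip.continuous hSball
  have huD : ∀ x, DifferentiableAt ℝ u (S x) := fun x =>
    hu.differentiableAt (isOpen_ball.mem_nhds (hSball x))
  have hSD : ∀ x ≠ 0, DifferentiableAt ℝ S x := fun x hx =>
    (differentiableAt_radialTransport hd hx).const_smul c
  have hmeas : ∀ s : Set ℝ, IsOpen s → MeasurableSet {x ∈ ball (0 : Euc d) R | u x ∈ s} :=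
    fun s hs => (hu.continuousOn.isOpen_inter_preimage isOpen_ball hs).measurableSet
  have hA : MeasurableSet {x ∈ ball (0 : Euc d) R | u x ≤ k} := by
    convert (measurableSet_ball (x := (0 : Euc d)) (ε := R)).diff (hmeas (Ioi k) isOpen_Ioi) using 1
    ext x
    simp +contextual
  have hC : MeasurableSet {x ∈ ball (0 : Euc d) R | l ≤ u x} := by
    convert (measurableSet_ball (x := (0 : Euc d)) (ε := R)).diff (hmeas (Iio l) isOpen_Iio) using 1
    ext x
    simp +contextual
  have hM : MeasurableSet {x ∈ ball (0 : Euc d) R | k < u x ∧ u x < l} :=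
    hmeas (Ioo k l) isOpen_Ioo
  have hvol : ∀ s ⊆ ball (0 : Euc d) R, MeasurableSet s →
      volume s = ENNReal.ofReal (c ^ d) * gaussMeasure (Euc d) (S ⁻¹' s) := by
    intro s hs hsm
    rw [← Measure.restrict_eq_self volume hs, ← hmap, Measure.smul_apply, smul_eq_mul,
      Measure.map_apply hSm hsm]
  have hball : volume (ball (0 : Euc d) R) = ENNReal.ofReal (c ^ d) := by
    rw [hvol _ Subset.rfl measurableSet_ball, preimage_eq_univ_iff.2 (by
      rintro _ ⟨x, rfl⟩; exact hSball x), measure_univ, mul_one]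
  have hpre : ∀ s : Set ℝ, S ⁻¹' {x ∈ ball (0 : Euc d) R | u x ∈ s} = (u ∘ S) ⁻¹' s := by
    intro s
    ext x
    exact and_iff_right (hSball x)
  have hne : ∀ᵐ x ∂gaussMeasure (Euc d), x ≠ 0 :=
    (withDensity_absolutelyContinuous _ _).ae_le (Measure.ae_ne volume 0)
  have hder : ∫⁻ x in (u ∘ S) ⁻¹' Ioo k l, ‖fderiv ℝ (u ∘ S) x‖ₑ ∂gaussMeasure (Euc d)
      ≤ ENNReal.ofReal c *
        ∫⁻ x in (u ∘ S) ⁻¹' Ioo k l, ‖fderiv ℝ u (S x)‖ₑ ∂gaussMeasure (Euc d) := by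
    rw [← lintegral_const_mul' _ _ ENNReal.ofReal_ne_top]
    refine lintegral_mono_ae ((ae_restrict_of_ae hne).mono fun x hx => ?_)
    have hle : ‖fderiv ℝ S x‖ ≤ c := by
      simpa [hc.le] using norm_fderiv_le_of_lipschitz ℝ hSlip (x₀ := x)
    rw [fderiv_comp x (huD x) (hSD x hx), ← ofReal_norm, ← ofReal_norm,
      ← ENNReal.ofReal_mul hc.le]
    refine ENNReal.ofReal_le_ofReal ((ContinuousLinearMap.opNorm_comp_le _ _).trans ?_)
    rw [mul_comm]
    gcongr
  have hint : ENNReal.ofReal (c ^ d) *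
        ∫⁻ x in (u ∘ S) ⁻¹' Ioo k l, ‖fderiv ℝ u (S x)‖ₑ ∂gaussMeasure (Euc d)
      = ∫⁻ x in {x ∈ ball (0 : Euc d) R | k < u x ∧ u x < l}, ‖fderiv ℝ u x‖ₑ := by
    have hD : Measurable fun x => ‖fderiv ℝ u x‖ₑ := (measurable_fderiv ℝ u).enorm
    rw [← hpre, ← setLIntegral_map (s := {x ∈ ball (0 : Euc d) R | u x ∈ Ioo k l}) hM hD hSm,
      ← smul_eq_mul, ← lintegral_smul_measure, ← Measure.restrict_smul, hmap,
      Measure.restrict_restrict (hmeas _ isOpen_Ioo), inter_eq_left.2 (sep_subset _ _)]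
    rfl
  have hmain := two_mul_gaussMeasure_mul_le huS
    (fun x hx => (huD x).comp x (hSD x hx)) hkl
  rw [hvol _ (sep_subset _ _) hA, hvol _ (sep_subset _ _) hC, hball, ← hint]
  have hA' : S ⁻¹' {x ∈ ball (0 : Euc d) R | u x ≤ k} = (u ∘ S) ⁻¹' Iic k := hpre (Iic k)
  have hC' : S ⁻¹' {x ∈ ball (0 : Euc d) R | l ≤ u x} = (u ∘ S) ⁻¹' Ici l := hpre (Ici l)
  rw [hA', hC']
  set a := gaussMeasure (Euc d) ((u ∘ S) ⁻¹' Iic k)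
  set b := gaussMeasure (Euc d) ((u ∘ S) ⁻¹' Ici l)
  set I := ∫⁻ x in (u ∘ S) ⁻¹' Ioo k l, ‖fderiv ℝ u (S x)‖ₑ ∂gaussMeasure (Euc d)
  set v := ENNReal.ofReal (c ^ d)
  have h2R : ENNReal.ofReal c ≤ 2 * ENNReal.ofReal R := by
    rw [← ENNReal.ofReal_ofNat, ← ENNReal.ofReal_mul zero_le_two]
    exact ENNReal.ofReal_le_ofReal hc2
  refine (ENNReal.mul_le_mul_iff_right two_ne_zero ENNReal.ofNat_ne_top).1 ?_
  calc 2 * (ENNReal.ofReal (l - k) * (v * a) * (v * b))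
      = v * v * (2 * (ENNReal.ofReal (l - k) * (a * b))) := by ring
    _ ≤ v * v * (2 * ENNReal.ofReal R * I) := by
        refine mul_le_mul_right (hmain.trans (hder.trans ?_)) _
        gcongr
    _ = 2 * (ENNReal.ofReal R * v * (v * I)) := by ring

end Ball

/-- **Intermediate value lemma in H¹.** For `u` continuously differentiable on `B_R` with
square-integrable gradient, and `k ≤ l`,
`(l-k) |{u ≤ k} ∩ B_R| |{u ≥ l} ∩ B_R|
  ≤ R |B_R| |{k < u < l} ∩ B_R|^{1/2} (∫_{B_R ∩ {u > k}} |∇u|²)^{1/2}`. -/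
theorem intermediate_value_H1 (d : ℕ) (hd : 1 ≤ d) (R : ℝ) (hR : 0 < R)
    (u : Euc d → ℝ) (hu : ContDiffOn ℝ 1 u (ball (0 : Euc d) R))
    (hgrad : IntegrableOn (fun x => ‖gradient u x‖ ^ 2) (ball (0 : Euc d) R))
    (k l : ℝ) (hkl : k ≤ l) :
    (l - k) * (volume {x ∈ ball (0 : Euc d) R | u x ≤ k}).toReal
        * (volume {x ∈ ball (0 : Euc d) R | l ≤ u x}).toReal
      ≤ R * (volume (ball (0 : Euc d) R)).toReal
        * (volume {x ∈ ball (0 : Euc d) R | k < u x ∧ u x < l}).toReal ^ ((1 : ℝ) / 2)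
        * (∫ x in ball (0 : Euc d) R ∩ {x | k < u x}, ‖gradient u x‖ ^ 2) ^ ((1 : ℝ) / 2) := by
  rcases hkl.eq_or_lt with rfl | hkl
  · rw [sub_self, zero_mul, zero_mul]
    have : 0 ≤ ∫ x in ball (0 : Euc d) R ∩ {x | k < u x}, ‖gradient u x‖ ^ 2 :=
      integral_nonneg fun x => sq_nonneg _
    positivity
  set B := ball (0 : Euc d) R
  set M := {x ∈ B | k < u x ∧ u x < l}
  have hB : volume B ≠ ⊤ := measure_ball_lt_top.ne
  have hMfin : volume M ≠ ⊤ := measure_ne_top_of_subset (sep_subset _ _) hB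
  have hint : IntegrableOn (fun x => ‖gradient u x‖ ^ 2) (B ∩ {x | k < u x}) :=
    hgrad.mono_set inter_subset_left
  have hCS : ∫⁻ x in M, ‖fderiv ℝ u x‖ₑ ≤ volume M ^ ((1 : ℝ) / 2) *
      ENNReal.ofReal (∫ x in B ∩ {x | k < u x}, ‖gradient u x‖ ^ 2) ^ ((1 : ℝ) / 2) := by
    have h := ENNReal.lintegral_mul_le_Lp_mul_Lq (volume.restrict M) Real.HolderConjugate.two_two
      (f := fun _ => 1) (g := fun x => ‖fderiv ℝ u x‖ₑ) aemeasurable_const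
      (measurable_fderiv ℝ u).enorm.aemeasurable
    simp only [Pi.mul_apply, one_mul, ENNReal.one_rpow, lintegral_const,
      Measure.restrict_apply_univ] at h
    refine h.trans ?_
    gcongr
    rw [ofReal_integral_eq_lintegral_ofReal hint (ae_of_all _ fun x => sq_nonneg _)]
    have hsub : M ⊆ B ∩ {x | k < u x} := fun x hx => ⟨hx.1, hx.2.1⟩
    refine (lintegral_mono fun x => le_of_eq ?_).trans (lintegral_mono_set hsub)
    rw [ENNReal.rpow_two, gradient, LinearIsometryEquiv.norm_map, ← ofReal_norm,
      ENNReal.ofReal_pow (norm_nonneg _)]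
  have h := (ofReal_sub_mul_volume_mul_volume_le (Nat.one_le_iff_ne_zero.1 hd) hR
    (hu.differentiableOn one_ne_zero) hkl).trans (mul_le_mul_right hCS _)
  have h' := ENNReal.toReal_mono (by finiteness) h
  simp only [ENNReal.toReal_mul, ENNReal.toReal_ofReal (sub_nonneg.2 hkl.le),
    ENNReal.toReal_ofReal hR.le, ← ENNReal.toReal_rpow,
    ENNReal.toReal_ofReal (integral_nonneg fun x => sq_nonneg ‖gradient u x‖)] at h'
  rwa [← mul_assoc] at h'
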